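/- Let r > 0 and let n be an integer satisfying condition (⋆). Let u, v ∈ X_r and let w_u, w_v ∈ X_r satisfy √n·w_u − (1/p⁰)Q(w_u,w_u) = u and √n·w_v − (1/p⁰)Q(w_v,w_v) = v in L¹(ℝ³). Then ‖w_u − w_v‖ ≤ (2/√n)‖u − v‖. -/

import Mathlib

/-!
Write `Δ = w_u - w_v` and `Q⁻(f, g) = f L(g)`, where the collision frequency `L` is linear and
nonnegative on nonnegative functions. Subtracting the two equations gives
`(√n + L(w_u)/p⁰) Δ = (u - v) - w_v L(Δ)/p⁰ + (Q⁺(w_u,w_u) - Q⁺(w_v,w_v))/p⁰`.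
The coefficient on the left is at least `√n`. With `C = 4πC₁αβ²`, the pointwise bound
`|L(Δ)| ≤ C‖Δ‖` (`lossFreq_le`) controls the loss remainder by `Cr‖Δ‖`, and the bilinear bound
`‖Q⁺(f,g)/p⁰‖ ≤ C‖f‖‖g‖` controls the gain difference by `2Cr‖Δ‖` (`gain_difference`). Hence
`(√n - 3Cr)‖Δ‖ ≤ ‖u - v‖`, and `6Cr ≤ √n`.

The bound on `Q⁺` rests on the invariance of `dp̄ dq̄/(p⁰q⁰)` under `(p̄,q̄) ↦ (p̄′,q̄′)` for fixed
`ω` (`coll_lintegral`). This map preserves every line `s ↦ (p̄ + sω̂, q̄ - sω̂)`, so integrating along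
these lines (`line_lintegral`) reduces the claim to one dimension. There the map is an elastic
collision of two particles on a line: an involution of `ℝ` (`lineShift_invol`) whose derivative is
`-p′⁰q′⁰/(p⁰q⁰)` (`lineShift_hasDerivAt`).
-/

open MeasureTheory Real

noncomputable section

/-- Momentum space `ℝ³`. -/
abbrev E3 : Type := EuclideanSpace ℝ (Fin 3)

/-- The scalar product associated with the Bianchi type I metric coefficients `α = a(t)`,
`β = b(t)`: `p̄·q̄ = α²p¹q¹ + β²(p²q² + p³q³)`. -/
def mdot (α β : ℝ) (p q : E3) : ℝ :=
  α ^ 2 * p 0 * q 0 + β ^ 2 * (p 1 * q 1 + p 2 * q 2)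

/-- `p⁰ = √(1 + |p̄|²)` where `|p̄|² = p̄·p̄`. -/
def pZ (α β : ℝ) (p : E3) : ℝ := Real.sqrt (1 + mdot α β p p)

/-- `ω` normalized to unit length for the metric norm. -/
def omHat (α β : ℝ) (ω : E3) : E3 := (Real.sqrt (mdot α β ω ω))⁻¹ • ω

/-- The total energy `e = p⁰ + q⁰`. -/
def collE (α β : ℝ) (p q : E3) : ℝ := pZ α β p + pZ α β q

/-- The function `C(p̄, q̄, ω)` of Glassey's representation of post-collisional momenta. -/
def collC (α β : ℝ) (p q ω : E3) : ℝ :=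
  2 * pZ α β p * pZ α β q * collE α β p q *
      mdot α β (omHat α β ω) ((pZ α β q)⁻¹ • q - (pZ α β p)⁻¹ • p) /
    (collE α β p q ^ 2 - mdot α β (omHat α β ω) (p + q) ^ 2)

/-- The post-collisional momentum `p̄′ = p̄ + C(p̄,q̄,ω)ω̂`. -/
def pPr (α β : ℝ) (p q ω : E3) : E3 := p + collC α β p q ω • omHat α β ω

/-- The post-collisional momentum `q̄′ = q̄ − C(p̄,q̄,ω)ω̂`. -/
def qPr (α β : ℝ) (p q ω : E3) : E3 := q - collC α β p q ω • omHat α β ω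

/-- The surface measure on the unit sphere `S² ⊂ ℝ³`. -/
def sphMeas : Measure (Metric.sphere (0 : E3) 1) := (volume : Measure E3).toSphere

/-- The gain term `Q⁺(f,g)`. -/
def Qplus (α β : ℝ) (S₀ : E3 → E3 → E3 → E3 → ℝ) (f g : E3 → ℝ) (p : E3) : ℝ :=
  α * β ^ 2 *
    ∫ q : E3, (pZ α β q)⁻¹ *
      ∫ ω : Metric.sphere (0 : E3) 1,
        f (pPr α β p q ω) * g (qPr α β p q ω) *
          S₀ p q (pPr α β p q ω) (qPr α β p q ω) ∂sphMeas

/-- The loss term `Q⁻(f,g)`. -/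
def Qminus (α β : ℝ) (S₀ : E3 → E3 → E3 → E3 → ℝ) (f g : E3 → ℝ) (p : E3) : ℝ :=
  α * β ^ 2 *
    ∫ q : E3, (pZ α β q)⁻¹ *
      ∫ ω : Metric.sphere (0 : E3) 1,
        f p * g q * S₀ p q (pPr α β p q ω) (qPr α β p q ω) ∂sphMeas

/-- The collision operator `Q = Q⁺ − Q⁻`. -/
def Qcoll (α β : ℝ) (S₀ : E3 → E3 → E3 → E3 → ℝ) (f g : E3 → ℝ) (p : E3) : ℝ :=
  Qplus α β S₀ f g p - Qminus α β S₀ f g p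

/-- The space `L¹(ℝ³)`. -/
abbrev L1 : Type := Lp ℝ 1 (volume : Measure E3)

/-- Membership in `X_r = {f ∈ L¹(ℝ³) : f ≥ 0 a.e., ‖f‖ ≤ r}`. -/
def memX (r : ℝ) (f : L1) : Prop := (0 ≤ᵐ[volume] ⇑f) ∧ ‖f‖ ≤ r

end

/-! ### The collision map on a line -/

lemma gap_pos {a b s t : ℝ} (ha : |s| < a) (hb : |t| < b) : 0 < (a + b) ^ 2 - (s + t) ^ 2 := by
  have h1 := abs_lt.1 ha
  have h2 := abs_lt.1 hb
  nlinarith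

lemma post_energy_pos {a s E T : ℝ} (ha : |s| < a) (hE : 0 < E ^ 2 - T ^ 2) :
    0 < (E ^ 2 + T ^ 2) * a - 2 * T * E * s := by
  have h1 := abs_lt.1 ha
  have ha0 : 0 < a := (abs_nonneg s).trans_lt ha
  nlinarith [mul_nonneg (sq_nonneg (E - T)) (by linarith : 0 ≤ a + s),
    mul_nonneg (sq_nonneg (E + T)) (by linarith : 0 ≤ a - s), mul_pos hE ha0, sq_nonneg T]

/-- The function `C(p̄, q̄, ω)` along the line `s ↦ (p̄ + sω̂, q̄ - sω̂)`. Here `x = ω̂·p̄` and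
`y = ω̂·q̄`, and `A = 1 + |p̄|² - x²`, `B = 1 + |q̄|² - y²` are the squared effective masses of the
two particles for the motion in the direction `ω̂`. -/
noncomputable def lineShift (A B x y s : ℝ) : ℝ :=
  2 * (√(A + (x + s) ^ 2) + √(B + (y - s) ^ 2)) *
      ((y - s) * √(A + (x + s) ^ 2) - (x + s) * √(B + (y - s) ^ 2)) /
    ((√(A + (x + s) ^ 2) + √(B + (y - s) ^ 2)) ^ 2 - (x + y) ^ 2)

lemma abs_lt_energy {A s : ℝ} (hA : 0 < A) : |s| < √(A + s ^ 2) := by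
  rw [← Real.sqrt_sq_eq_abs]
  exact Real.sqrt_lt_sqrt (sq_nonneg s) (by linarith)

/-- The post-collisional energies: the collision is the reflection of the momentum in the centre of
mass frame of the one-dimensional motion, so the new energies are rational in the old energies and
momenta. -/
lemma post_energy {A B x y : ℝ} (hA : 0 < A) (hB : 0 < B) (s : ℝ) :
    √(A + (x + (s + lineShift A B x y s)) ^ 2) =
      (((√(A + (x + s) ^ 2) + √(B + (y - s) ^ 2)) ^ 2 + (x + y) ^ 2) * √(A + (x + s) ^ 2)
        - 2 * (x + y) * (√(A + (x + s) ^ 2) + √(B + (y - s) ^ 2)) * (x + s)) /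
      ((√(A + (x + s) ^ 2) + √(B + (y - s) ^ 2)) ^ 2 - (x + y) ^ 2) ∧
    √(B + (y - (s + lineShift A B x y s)) ^ 2) =
      (((√(A + (x + s) ^ 2) + √(B + (y - s) ^ 2)) ^ 2 + (x + y) ^ 2) * √(B + (y - s) ^ 2)
        - 2 * (x + y) * (√(A + (x + s) ^ 2) + √(B + (y - s) ^ 2)) * (y - s)) /
      ((√(A + (x + s) ^ 2) + √(B + (y - s) ^ 2)) ^ 2 - (x + y) ^ 2) := by
  have ha : |x + s| < √(A + (x + s) ^ 2) := abs_lt_energy hA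
  have hb : |y - s| < √(B + (y - s) ^ 2) := abs_lt_energy hB
  have hD := gap_pos ha hb
  have hT : x + s + (y - s) = x + y := by ring
  rw [hT] at hD
  have ha2 : √(A + (x + s) ^ 2) ^ 2 = A + (x + s) ^ 2 := Real.sq_sqrt (by positivity)
  have hb2 : √(B + (y - s) ^ 2) ^ 2 = B + (y - s) ^ 2 := Real.sq_sqrt (by positivity)
  have hpa := post_energy_pos ha hD
  have hpb := post_energy_pos hb hD
  unfold lineShift
  generalize √(A + (x + s) ^ 2) = a at *
  generalize √(B + (y - s) ^ 2) = b at *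
  obtain rfl : A = a ^ 2 - (x + s) ^ 2 := by linarith
  obtain rfl : B = b ^ 2 - (y - s) ^ 2 := by linarith
  constructor
  · rw [Real.sqrt_eq_iff_mul_self_eq_of_pos (div_pos hpa hD)]
    field_simp
    ring
  · rw [Real.sqrt_eq_iff_mul_self_eq_of_pos (div_pos hpb hD)]
    field_simp
    ring

lemma lineShift_invol {A B x y : ℝ} (hA : 0 < A) (hB : 0 < B) (s : ℝ) :
    s + lineShift A B x y s + lineShift A B x y (s + lineShift A B x y s) = s := by
  obtain ⟨h1, h2⟩ := post_energy (x := x) (y := y) hA hB s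
  have ha : |x + s| < √(A + (x + s) ^ 2) := abs_lt_energy hA
  have hb : |y - s| < √(B + (y - s) ^ 2) := abs_lt_energy hB
  have hD := gap_pos ha hb
  have hT : x + s + (y - s) = x + y := by ring
  rw [hT] at hD
  have hE : √(A + (x + (s + lineShift A B x y s)) ^ 2) + √(B + (y - (s + lineShift A B x y s)) ^ 2)
      = √(A + (x + s) ^ 2) + √(B + (y - s) ^ 2) := by
    rw [h1, h2]
    generalize √(A + (x + s) ^ 2) = a at *
    generalize √(B + (y - s) ^ 2) = b at *
    field_simp
    ring
  have hc : lineShift A B x y s = 2 * (√(A + (x + s) ^ 2) + √(B + (y - s) ^ 2)) *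
      ((y - s) * √(A + (x + s) ^ 2) - (x + s) * √(B + (y - s) ^ 2)) /
    ((√(A + (x + s) ^ 2) + √(B + (y - s) ^ 2)) ^ 2 - (x + y) ^ 2) := rfl
  rw [lineShift.eq_1 A B x y (s + lineShift A B x y s), hE, h1, h2]
  rw [hc]
  clear hc h1 h2 hE
  generalize √(A + (x + s) ^ 2) = a at *
  generalize √(B + (y - s) ^ 2) = b at *
  field_simp
  ring

/-- The one-dimensional Jacobian `-p′⁰q′⁰/(p⁰q⁰)` of the collision map. -/
lemma lineShift_hasDerivAt {A B x y : ℝ} (hA : 0 < A) (hB : 0 < B) (s : ℝ) :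
    HasDerivAt (fun s => s + lineShift A B x y s)
      (-(√(A + (x + (s + lineShift A B x y s)) ^ 2) * √(B + (y - (s + lineShift A B x y s)) ^ 2))
        / (√(A + (x + s) ^ 2) * √(B + (y - s) ^ 2))) s := by
  obtain ⟨h1, h2⟩ := post_energy (x := x) (y := y) hA hB s
  have ha : |x + s| < √(A + (x + s) ^ 2) := abs_lt_energy hA
  have hb : |y - s| < √(B + (y - s) ^ 2) := abs_lt_energy hB
  have hD := gap_pos ha hb
  have hT : x + s + (y - s) = x + y := by ring
  rw [hT] at hD
  have ha0 : 0 < √(A + (x + s) ^ 2) := Real.sqrt_pos.2 (by positivity)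
  have hb0 : 0 < √(B + (y - s) ^ 2) := Real.sqrt_pos.2 (by positivity)
  rw [h1, h2]
  have hx : HasDerivAt (fun s => x + s) 1 s := (hasDerivAt_id s).const_add x
  have hy : HasDerivAt (fun s => y - s) (-1) s := (hasDerivAt_id s).const_sub y
  have da : HasDerivAt (fun s => √(A + (x + s) ^ 2)) _ s :=
    ((hx.pow 2).const_add A).sqrt (by simp only [Pi.pow_apply]; positivity)
  have db : HasDerivAt (fun s => √(B + (y - s) ^ 2)) _ s :=
    ((hy.pow 2).const_add B).sqrt (by simp only [Pi.pow_apply]; positivity)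
  have key := (hasDerivAt_id s).add ((((da.add db).const_mul 2).mul
    ((hy.mul da).sub (hx.mul db))).div (((da.add db).pow 2).sub_const ((x + y) ^ 2)) hD.ne')
  refine key.congr_deriv ?_
  simp only [Pi.add_apply, Pi.sub_apply, Pi.mul_apply, Pi.pow_apply]
  generalize √(A + (x + s) ^ 2) = a at *
  generalize √(B + (y - s) ^ 2) = b at *
  field_simp
  ring

/-- The measure `ds/(p⁰q⁰)` on the line is invariant under the collision map. -/
lemma lineShift_lintegral {A B x y : ℝ} (hA : 0 < A) (hB : 0 < B) (G : ℝ → ENNReal) :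
    ∫⁻ s, G (s + lineShift A B x y s) *
        ENNReal.ofReal ((√(A + (x + s) ^ 2))⁻¹ * (√(B + (y - s) ^ 2))⁻¹) =
      ∫⁻ s, G s * ENNReal.ofReal ((√(A + (x + s) ^ 2))⁻¹ * (√(B + (y - s) ^ 2))⁻¹) := by
  have hinv : Function.Involutive (fun s => s + lineShift A B x y s) := fun s => lineShift_invol hA hB s
  have := lintegral_image_eq_lintegral_abs_deriv_mul (s := Set.univ) MeasurableSet.univ
    (fun s _ => (lineShift_hasDerivAt (x := x) (y := y) hA hB s).hasDerivWithinAt)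
    hinv.injective.injOn
    (fun s => G s * ENNReal.ofReal ((√(A + (x + s) ^ 2))⁻¹ * (√(B + (y - s) ^ 2))⁻¹))
  rw [Set.image_univ, hinv.surjective.range_eq, Measure.restrict_univ] at this
  rw [this]
  refine lintegral_congr fun s => ?_
  have hpos : ∀ u : ℝ, 0 < √(A + (x + u) ^ 2) * √(B + (y - u) ^ 2) := fun u => by positivity
  rw [mul_left_comm, ← ENNReal.ofReal_mul (abs_nonneg _)]
  congr 2
  rw [neg_div, abs_neg, abs_of_pos (div_pos (hpos _) (hpos _))]
  have h1 := hpos s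
  have h2 := hpos (s + lineShift A B x y s)
  rw [← mul_inv, ← mul_inv]
  field_simp

/-- Integration along the lines of direction `d`. The lines are parametrized redundantly by all their
points `z`; the weight selecting `0 < l z ≤ 1` gives each line total weight one. -/
lemma line_lintegral {Z : Type*} [NormedAddCommGroup Z] [NormedSpace ℝ Z] [MeasurableSpace Z]
    [BorelSpace Z] [SecondCountableTopology Z] (μ : Measure Z) [SFinite μ] [μ.IsAddRightInvariant]
    (l : Z →ₗ[ℝ] ℝ) (hlm : Measurable l) (d : Z) (hl : l d = 1)
    {F : Z → ENNReal} (hF : Measurable F) :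
    ∫⁻ z, F z ∂μ = ∫⁻ z, (Set.Ioc (0 : ℝ) 1).indicator 1 (l z) * (∫⁻ s : ℝ, F (z + s • d)) ∂μ := by
  have hφ : Measurable ((Set.Ioc (0 : ℝ) 1).indicator (1 : ℝ → ENNReal)) :=
    measurable_one.indicator measurableSet_Ioc
  -- Multiply by the integral over `s` of the indicator at `l z - s`, which is one; swap; translate
  -- `z` by `s • d`; swap back.
  calc ∫⁻ z, F z ∂μ
      = ∫⁻ z, (∫⁻ s : ℝ, F z * (Set.Ioc (0 : ℝ) 1).indicator 1 (l z - s)) ∂μ := by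
        refine lintegral_congr fun z => ?_
        have hm : Measurable fun s : ℝ => (Set.Ioc (0 : ℝ) 1).indicator (1 : ℝ → ENNReal) (l z - s) :=
          hφ.comp (measurable_const.sub measurable_id)
        rw [lintegral_const_mul _ hm,
          lintegral_sub_left_eq_self ((Set.Ioc (0 : ℝ) 1).indicator (1 : ℝ → ENNReal)) (l z),
          lintegral_indicator_one measurableSet_Ioc]
        simp
    _ = ∫⁻ s : ℝ, ∫⁻ z, F z * (Set.Ioc (0 : ℝ) 1).indicator 1 (l z - s) ∂μ := by
        apply lintegral_lintegral_swap
        refine Measurable.aemeasurable ?_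
        exact (hF.comp measurable_fst).mul
          (hφ.comp ((hlm.comp measurable_fst).sub measurable_snd))
    _ = ∫⁻ s : ℝ, ∫⁻ z, F (z + s • d) * (Set.Ioc (0 : ℝ) 1).indicator 1 (l z) ∂μ := by
        refine lintegral_congr fun s => ?_
        rw [← lintegral_add_right_eq_self _ (s • d)]
        simp [hl]
    _ = ∫⁻ z, (∫⁻ s : ℝ, F (z + s • d) * (Set.Ioc (0 : ℝ) 1).indicator 1 (l z)) ∂μ := by
        symm
        apply lintegral_lintegral_swap
        refine Measurable.aemeasurable ?_
        have : Measurable fun w : Z × ℝ => w.1 + w.2 • d := by fun_prop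
        exact (hF.comp this).mul (hφ.comp (hlm.comp measurable_fst))
    _ = _ := by
        refine lintegral_congr fun z => ?_
        have hm : Measurable fun s : ℝ => F (z + s • d) := hF.comp (by fun_prop)
        rw [lintegral_mul_const _ hm, mul_comm]

/-! ### Invariance of `dp̄ dq̄ / (p⁰q⁰)` under the collision map -/

lemma mdot_self_pos {α β : ℝ} (hα : 0 < α) (hβ : 0 < β) {ω : E3} (hω : ω ≠ 0) :
    0 < mdot α β ω ω := by
  have h0 : 0 ≤ mdot α β ω ω := by
    have : mdot α β ω ω = (α * ω 0) ^ 2 + ((β * ω 1) ^ 2 + (β * ω 2) ^ 2) := by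
      unfold mdot; ring
    rw [this]; positivity
  refine lt_of_le_of_ne h0 fun h => hω ?_
  have h1 : (α * ω 0) ^ 2 + ((β * ω 1) ^ 2 + (β * ω 2) ^ 2) = 0 := by
    rw [h]; unfold mdot; ring
  have e0 : (α * ω 0) ^ 2 = 0 := by
    nlinarith [sq_nonneg (α * ω 0), sq_nonneg (β * ω 1), sq_nonneg (β * ω 2)]
  have e1 : (β * ω 1) ^ 2 = 0 := by
    nlinarith [sq_nonneg (α * ω 0), sq_nonneg (β * ω 1), sq_nonneg (β * ω 2)]
  have e2 : (β * ω 2) ^ 2 = 0 := by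
    nlinarith [sq_nonneg (α * ω 0), sq_nonneg (β * ω 1), sq_nonneg (β * ω 2)]
  ext i
  fin_cases i
  · simpa [hα.ne'] using e0
  · simpa [hβ.ne'] using e1
  · simpa [hβ.ne'] using e2

lemma mdot_self_nonneg (α β : ℝ) (p : E3) : 0 ≤ mdot α β p p := by
  have : mdot α β p p = (α * p 0) ^ 2 + ((β * p 1) ^ 2 + (β * p 2) ^ 2) := by
    unfold mdot; ring
  rw [this]; positivity

lemma mdot_omHat {α β : ℝ} {ω : E3} (h : 0 < mdot α β ω ω) :
    mdot α β (omHat α β ω) (omHat α β ω) = 1 := by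
  have hs : √(mdot α β ω ω) ^ 2 = mdot α β ω ω := Real.sq_sqrt h.le
  have hs0 : 0 < √(mdot α β ω ω) := Real.sqrt_pos.2 h
  have : mdot α β (omHat α β ω) (omHat α β ω) = (√(mdot α β ω ω))⁻¹ ^ 2 * mdot α β ω ω := by
    simp only [omHat, mdot, PiLp.smul_apply, smul_eq_mul]
    ring
  rw [this, inv_pow, hs, inv_mul_cancel₀ h.ne']

lemma one_le_pZ (α β : ℝ) (p : E3) : 1 ≤ pZ α β p := by
  rw [pZ, Real.one_le_sqrt]
  linarith [mdot_self_nonneg α β p]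

/-- The Cauchy–Schwarz inequality for the metric product, with one factor of unit length. -/
lemma mdot_cs {α β : ℝ} {w : E3} (hw : mdot α β w w = 1) (p : E3) :
    mdot α β w p ^ 2 ≤ mdot α β p p := by
  have h := mdot_self_nonneg α β (p - mdot α β w p • w)
  have e : mdot α β (p - mdot α β w p • w) (p - mdot α β w p • w) =
      mdot α β p p - 2 * mdot α β w p ^ 2 + mdot α β w p ^ 2 * mdot α β w w := by
    simp only [mdot, PiLp.sub_apply, PiLp.smul_apply, smul_eq_mul]
    ring
  rw [e, hw] at h
  linarith

lemma pZ_line {α β : ℝ} {w : E3} (hw : mdot α β w w = 1) (p : E3) (s : ℝ) :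
    pZ α β (p + s • w) =
      √((1 + mdot α β p p - mdot α β w p ^ 2) + (mdot α β w p + s) ^ 2) := by
  have : mdot α β (p + s • w) (p + s • w) =
      mdot α β p p + 2 * s * mdot α β w p + s ^ 2 * mdot α β w w := by
    simp only [mdot, PiLp.add_apply, PiLp.smul_apply, smul_eq_mul]
    ring
  rw [pZ, this, hw]
  congr 1
  ring

lemma pZ_line' {α β : ℝ} {w : E3} (hw : mdot α β w w = 1) (q : E3) (s : ℝ) :
    pZ α β (q - s • w) =
      √((1 + mdot α β q q - mdot α β w q ^ 2) + (mdot α β w q - s) ^ 2) := by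
  have := pZ_line hw q (-s)
  rwa [neg_smul, ← sub_eq_add_neg, ← sub_eq_add_neg] at this

lemma collC_line {α β : ℝ} {ω : E3} (h : 0 < mdot α β ω ω) (p q : E3) (s : ℝ) :
    collC α β (p + s • omHat α β ω) (q - s • omHat α β ω) ω =
      lineShift (1 + mdot α β p p - mdot α β (omHat α β ω) p ^ 2)
        (1 + mdot α β q q - mdot α β (omHat α β ω) q ^ 2)
        (mdot α β (omHat α β ω) p) (mdot α β (omHat α β ω) q) s := by
  have hw := mdot_omHat h
  have hp1 := one_le_pZ α β (p + s • omHat α β ω)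
  have hq1 := one_le_pZ α β (q - s • omHat α β ω)
  rw [lineShift, ← pZ_line hw, ← pZ_line' hw, collC, collE]
  generalize pZ α β (p + s • omHat α β ω) = a at *
  generalize pZ α β (q - s • omHat α β ω) = b at *
  generalize omHat α β ω = w at *
  have e1 : mdot α β w (p + s • w + (q - s • w)) = mdot α β w p + mdot α β w q := by
    simp only [mdot, PiLp.add_apply, PiLp.sub_apply, PiLp.smul_apply, smul_eq_mul]
    ring
  have e2 : mdot α β w (b⁻¹ • (q - s • w) - a⁻¹ • (p + s • w)) =
      b⁻¹ * (mdot α β w q - s * mdot α β w w) - a⁻¹ * (mdot α β w p + s * mdot α β w w) := by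
    simp only [mdot, PiLp.add_apply, PiLp.sub_apply, PiLp.smul_apply, smul_eq_mul]
    ring
  rw [e1, e2, hw]
  congr 1
  have ha : a ≠ 0 := by linarith
  have hb : b ≠ 0 := by linarith
  field_simp

lemma measurable_mdot (α β : ℝ) {X : Type*} [MeasurableSpace X] {f g : X → E3}
    (hf : Measurable f) (hg : Measurable g) : Measurable fun x => mdot α β (f x) (g x) := by
  unfold mdot
  fun_prop

lemma measurable_pZ (α β : ℝ) : Measurable (pZ α β) := by
  unfold pZ
  exact (measurable_const.add (measurable_mdot α β measurable_id measurable_id)).sqrt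

lemma measurable_omHat (α β : ℝ) : Measurable (omHat α β) := by
  unfold omHat
  exact (measurable_mdot α β measurable_id measurable_id).sqrt.inv.smul measurable_id

lemma measurable_collC (α β : ℝ) :
    Measurable fun x : (E3 × E3) × E3 => collC α β x.1.1 x.1.2 x.2 := by
  have hp : Measurable fun x : (E3 × E3) × E3 => pZ α β x.1.1 :=
    (measurable_pZ α β).comp (by fun_prop)
  have hq : Measurable fun x : (E3 × E3) × E3 => pZ α β x.1.2 :=
    (measurable_pZ α β).comp (by fun_prop)
  have ho : Measurable fun x : (E3 × E3) × E3 => omHat α β x.2 :=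
    (measurable_omHat α β).comp (by fun_prop)
  have h1 : Measurable fun x : (E3 × E3) × E3 => mdot α β (omHat α β x.2)
      ((pZ α β x.1.2)⁻¹ • x.1.2 - (pZ α β x.1.1)⁻¹ • x.1.1) :=
    measurable_mdot α β ho (by fun_prop)
  have h2 : Measurable fun x : (E3 × E3) × E3 => mdot α β (omHat α β x.2) (x.1.1 + x.1.2) :=
    measurable_mdot α β ho (by fun_prop)
  unfold collC collE
  fun_prop

lemma measurable_pPr (α β : ℝ) :
    Measurable fun x : (E3 × E3) × E3 => pPr α β x.1.1 x.1.2 x.2 := by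
  have := measurable_collC α β
  have ho : Measurable fun x : (E3 × E3) × E3 => omHat α β x.2 :=
    (measurable_omHat α β).comp (by fun_prop)
  unfold pPr
  fun_prop

lemma measurable_qPr (α β : ℝ) :
    Measurable fun x : (E3 × E3) × E3 => qPr α β x.1.1 x.1.2 x.2 := by
  have := measurable_collC α β
  have ho : Measurable fun x : (E3 × E3) × E3 => omHat α β x.2 :=
    (measurable_omHat α β).comp (by fun_prop)
  unfold qPr
  fun_prop

/-- For a fixed direction `ω` the measure `dp̄ dq̄ / (p⁰q⁰)` is invariant under
`(p̄, q̄) ↦ (p̄′, q̄′)`, because the collision map preserves each line of direction `(ω̂, -ω̂)`. -/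
lemma coll_lintegral {α β : ℝ} {ω : E3} (h : 0 < mdot α β ω ω) {F : E3 × E3 → ENNReal}
    (hF : Measurable F) :
    ∫⁻ z : E3 × E3, F (pPr α β z.1 z.2 ω, qPr α β z.1 z.2 ω) *
        ENNReal.ofReal ((pZ α β z.1)⁻¹ * (pZ α β z.2)⁻¹) =
      ∫⁻ z : E3 × E3, F z * ENNReal.ofReal ((pZ α β z.1)⁻¹ * (pZ α β z.2)⁻¹) := by
  have hw := mdot_omHat h
  have hpZ := measurable_pZ α β
  have hρ : Measurable fun z : E3 × E3 =>
      ENNReal.ofReal ((pZ α β z.1)⁻¹ * (pZ α β z.2)⁻¹) := by fun_prop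
  have hΦ : Measurable fun z : E3 × E3 => (pPr α β z.1 z.2 ω, qPr α β z.1 z.2 ω) :=
    ((measurable_pPr α β).comp (measurable_id.prodMk measurable_const)).prodMk
      ((measurable_qPr α β).comp (measurable_id.prodMk measurable_const))
  let l : E3 × E3 →ₗ[ℝ] ℝ :=
    { toFun := fun z => mdot α β (omHat α β ω) z.1
      map_add' := fun z z' => by
        simp only [mdot, Prod.fst_add, PiLp.add_apply]; ring
      map_smul' := fun c z => by
        simp only [mdot, Prod.smul_fst, PiLp.smul_apply, smul_eq_mul, RingHom.id_apply]; ring }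
  have hlm : Measurable l := measurable_mdot α β measurable_const measurable_fst
  have : (volume : Measure (E3 × E3)).IsAddRightInvariant :=
    inferInstanceAs (((volume : Measure E3).prod (volume : Measure E3)).IsAddRightInvariant)
  have hG₁ : Measurable fun z : E3 × E3 => F (pPr α β z.1 z.2 ω, qPr α β z.1 z.2 ω) *
      ENNReal.ofReal ((pZ α β z.1)⁻¹ * (pZ α β z.2)⁻¹) := (hF.comp hΦ).mul hρ
  have hG₂ : Measurable fun z : E3 × E3 => F z *
      ENNReal.ofReal ((pZ α β z.1)⁻¹ * (pZ α β z.2)⁻¹) := hF.mul hρ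
  rw [line_lintegral volume l hlm (omHat α β ω, -omHat α β ω) hw hG₁,
    line_lintegral volume l hlm (omHat α β ω, -omHat α β ω) hw hG₂]
  refine lintegral_congr fun z => ?_
  congr 1
  obtain ⟨p, q⟩ := z
  have hA : 0 < 1 + mdot α β p p - mdot α β (omHat α β ω) p ^ 2 := by
    linarith [mdot_cs hw p]
  have hB : 0 < 1 + mdot α β q q - mdot α β (omHat α β ω) q ^ 2 := by
    linarith [mdot_cs hw q]
  have key := lineShift_lintegral (x := mdot α β (omHat α β ω) p) (y := mdot α β (omHat α β ω) q)
    hA hB (fun s => F (p + s • omHat α β ω, q - s • omHat α β ω))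
  simp only [← collC_line h, ← pZ_line hw, ← pZ_line' hw] at key
  simp only [Prod.smul_mk, Prod.mk_add_mk, smul_neg,
    ← sub_eq_add_neg, pPr, qPr]
  rw [← key]
  refine lintegral_congr fun s => ?_
  rw [add_smul, add_assoc, sub_sub]

/-! ### The gain term -/

instance instFiniteSphMeas : IsFiniteMeasure sphMeas :=
  inferInstanceAs (IsFiniteMeasure (volume : Measure E3).toSphere)

lemma sphMeas_univ : sphMeas Set.univ = ENNReal.ofReal (4 * π) := by
  rw [sphMeas, Measure.toSphere_apply_univ, EuclideanSpace.volume_ball_fin_three,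
    finrank_euclideanSpace_fin]
  rw [ENNReal.ofReal_one, one_pow, one_mul, ← ENNReal.ofReal_natCast,
    ← ENNReal.ofReal_mul (by positivity)]
  congr 1
  push_cast
  ring

lemma measurable_post (α β : ℝ) :
    Measurable fun x : (E3 × E3) × Metric.sphere (0 : E3) 1 =>
      (pPr α β x.1.1 x.1.2 x.2, qPr α β x.1.1 x.1.2 x.2) := by
  have h : Measurable fun x : (E3 × E3) × Metric.sphere (0 : E3) 1 => (x.1, (x.2 : E3)) :=
    measurable_fst.prodMk (measurable_subtype_coe.comp measurable_snd)
  exact ((measurable_pPr α β).comp h).prodMk ((measurable_qPr α β).comp h)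

lemma measurable_kernel (α β : ℝ) {S₀ : E3 → E3 → E3 → E3 → ℝ}
    (hS : Measurable fun x : (E3 × E3) × E3 × E3 => S₀ x.1.1 x.1.2 x.2.1 x.2.2) :
    Measurable fun x : (E3 × E3) × Metric.sphere (0 : E3) 1 =>
      S₀ x.1.1 x.1.2 (pPr α β x.1.1 x.1.2 x.2) (qPr α β x.1.1 x.1.2 x.2) :=
  hS.comp (measurable_fst.prodMk (measurable_post α β))

/-- The integrand of `(1/p⁰) Q⁺(f, g)` as a function on `ℝ³ × ℝ³ × S²`, without the factor
`αβ²`. -/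
noncomputable def gainKer (α β : ℝ) (S₀ : E3 → E3 → E3 → E3 → ℝ) (f g : E3 → ℝ)
    (x : (E3 × E3) × Metric.sphere (0 : E3) 1) : ℝ :=
  (pZ α β x.1.1)⁻¹ * ((pZ α β x.1.2)⁻¹ *
    (f (pPr α β x.1.1 x.1.2 x.2) * g (qPr α β x.1.1 x.1.2 x.2) *
      S₀ x.1.1 x.1.2 (pPr α β x.1.1 x.1.2 x.2) (qPr α β x.1.1 x.1.2 x.2)))

lemma measurable_gainKer (α β : ℝ) {S₀ : E3 → E3 → E3 → E3 → ℝ}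
    (hS : Measurable fun x : (E3 × E3) × E3 × E3 => S₀ x.1.1 x.1.2 x.2.1 x.2.2)
    {f g : E3 → ℝ} (hf : Measurable f) (hg : Measurable g) :
    Measurable (gainKer α β S₀ f g) := by
  have h1 := measurable_kernel α β hS
  have h2 := hf.comp (measurable_fst.comp (measurable_post α β))
  have h3 := hg.comp (measurable_snd.comp (measurable_post α β))
  have h4 : Measurable fun x : (E3 × E3) × Metric.sphere (0 : E3) 1 => pZ α β x.1.1 :=
    (measurable_pZ α β).comp (measurable_fst.comp measurable_fst)
  have h5 : Measurable fun x : (E3 × E3) × Metric.sphere (0 : E3) 1 => pZ α β x.1.2 :=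
    (measurable_pZ α β).comp (measurable_snd.comp measurable_fst)
  exact h4.inv.mul (h5.inv.mul ((h2.mul h3).mul h1))

lemma gainKer_lintegral {α β C₁ : ℝ} (hα : 0 < α) (hβ : 0 < β) (hC₁ : 0 < C₁)
    {S₀ : E3 → E3 → E3 → E3 → ℝ}
    (hS : Measurable fun x : (E3 × E3) × E3 × E3 => S₀ x.1.1 x.1.2 x.2.1 x.2.2)
    (hS0 : ∀ p q p' q', 0 ≤ S₀ p q p' q') (hS1 : ∀ p q p' q', S₀ p q p' q' ≤ C₁)
    {f g : E3 → ℝ} (hf : Measurable f) (hg : Measurable g) :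
    ∫⁻ x, ‖gainKer α β S₀ f g x‖ₑ ∂((volume : Measure (E3 × E3)).prod sphMeas) ≤
      ENNReal.ofReal (4 * π * C₁) * ((∫⁻ p, ‖f p‖ₑ) * ∫⁻ q, ‖g q‖ₑ) := by
  have hpos : ∀ p, 0 < pZ α β p := fun p => lt_of_lt_of_le one_pos (one_le_pZ α β p)
  rw [lintegral_prod_symm _ (measurable_gainKer α β hS hf hg).enorm.aemeasurable]
  have hF : Measurable fun z : E3 × E3 => ‖f z.1‖ₑ * ‖g z.2‖ₑ := by fun_prop
  have bound : ∀ ω : Metric.sphere (0 : E3) 1,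
      ∫⁻ z : E3 × E3, ‖gainKer α β S₀ f g (z, ω)‖ₑ ≤
        ENNReal.ofReal C₁ * ((∫⁻ p, ‖f p‖ₑ) * ∫⁻ q, ‖g q‖ₑ) := by
    intro ω
    have hω : 0 < mdot α β ω ω := mdot_self_pos hα hβ (ne_zero_of_mem_unit_sphere ω)
    calc ∫⁻ z : E3 × E3, ‖gainKer α β S₀ f g (z, ω)‖ₑ
        ≤ ∫⁻ z : E3 × E3, ENNReal.ofReal C₁ *
            ((‖f (pPr α β z.1 z.2 ω)‖ₑ * ‖g (qPr α β z.1 z.2 ω)‖ₑ) *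
              ENNReal.ofReal ((pZ α β z.1)⁻¹ * (pZ α β z.2)⁻¹)) := by
          refine lintegral_mono fun z => ?_
          simp only [← ofReal_norm]
          rw [← ENNReal.ofReal_mul (norm_nonneg _), ← ENNReal.ofReal_mul (by positivity),
            ← ENNReal.ofReal_mul hC₁.le]
          apply ENNReal.ofReal_le_ofReal
          have h1 := inv_pos.2 (hpos z.1)
          have h2 := inv_pos.2 (hpos z.2)
          simp only [gainKer, norm_mul, Real.norm_eq_abs, abs_of_pos h1, abs_of_pos h2,
            abs_of_nonneg (hS0 _ _ _ _)]
          have h3 := hS1 z.1 z.2 (pPr α β z.1 z.2 ω) (qPr α β z.1 z.2 ω)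
          calc _ = S₀ z.1 z.2 (pPr α β z.1 z.2 ω) (qPr α β z.1 z.2 ω) *
                (|f (pPr α β z.1 z.2 ω)| * |g (qPr α β z.1 z.2 ω)| *
                  ((pZ α β z.1)⁻¹ * (pZ α β z.2)⁻¹)) := by ring
            _ ≤ _ := mul_le_mul_of_nonneg_right h3 (by positivity)
      _ = ENNReal.ofReal C₁ * ∫⁻ z : E3 × E3,
            ((‖f (pPr α β z.1 z.2 ω)‖ₑ * ‖g (qPr α β z.1 z.2 ω)‖ₑ) *
              ENNReal.ofReal ((pZ α β z.1)⁻¹ * (pZ α β z.2)⁻¹)) :=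
          lintegral_const_mul' _ _ ENNReal.ofReal_ne_top
      _ = ENNReal.ofReal C₁ * ∫⁻ z : E3 × E3,
            ((‖f z.1‖ₑ * ‖g z.2‖ₑ) * ENNReal.ofReal ((pZ α β z.1)⁻¹ * (pZ α β z.2)⁻¹)) := by
          rw [coll_lintegral hω hF]
      _ ≤ ENNReal.ofReal C₁ * ∫⁻ z : E3 × E3, ‖f z.1‖ₑ * ‖g z.2‖ₑ := by
          refine mul_le_mul_right (lintegral_mono fun z => ?_) _
          refine mul_le_of_le_one_right' ?_
          rw [ENNReal.ofReal_le_one]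
          exact mul_le_one₀ (inv_le_one_of_one_le₀ (one_le_pZ α β _)) (inv_pos.2 (hpos _)).le
            (inv_le_one_of_one_le₀ (one_le_pZ α β _))
      _ = _ := by
          rw [Measure.volume_eq_prod, lintegral_prod_mul hf.enorm.aemeasurable hg.enorm.aemeasurable]
  refine (lintegral_mono bound).trans ?_
  rw [lintegral_const, sphMeas_univ, mul_right_comm, ← ENNReal.ofReal_mul hC₁.le, mul_comm C₁]

lemma gainKer_integral {α β C₁ : ℝ} (hα : 0 < α) (hβ : 0 < β) (hC₁ : 0 < C₁)
    {S₀ : E3 → E3 → E3 → E3 → ℝ}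
    (hS : Measurable fun x : (E3 × E3) × E3 × E3 => S₀ x.1.1 x.1.2 x.2.1 x.2.2)
    (hS0 : ∀ p q p' q', 0 ≤ S₀ p q p' q') (hS1 : ∀ p q p' q', S₀ p q p' q' ≤ C₁)
    {f g : E3 → ℝ} (hf : Measurable f) (hg : Measurable g)
    (hfi : Integrable f) (hgi : Integrable g) :
    Integrable (gainKer α β S₀ f g) ((volume : Measure (E3 × E3)).prod sphMeas) ∧
    ∫ x, ‖gainKer α β S₀ f g x‖ ∂((volume : Measure (E3 × E3)).prod sphMeas) ≤
      4 * π * C₁ * ((∫ p, ‖f p‖) * ∫ q, ‖g q‖) := by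
  have key := gainKer_lintegral hα hβ hC₁ hS hS0 hS1 hf hg
  have hm := (measurable_gainKer α β hS hf hg).aestronglyMeasurable
    (μ := (volume : Measure (E3 × E3)).prod sphMeas)
  rw [← ofReal_integral_norm_eq_lintegral_enorm hfi,
    ← ofReal_integral_norm_eq_lintegral_enorm hgi,
    ← ENNReal.ofReal_mul (by positivity), ← ENNReal.ofReal_mul (by positivity)] at key
  have hi : Integrable (gainKer α β S₀ f g) ((volume : Measure (E3 × E3)).prod sphMeas) :=
    ⟨hm, key.trans_lt ENNReal.ofReal_lt_top⟩
  refine ⟨hi, ?_⟩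
  rw [← ofReal_integral_norm_eq_lintegral_enorm hi] at key
  exact (ENNReal.ofReal_le_ofReal_iff (by positivity)).1 key

lemma Qplus_eq (α β : ℝ) (S₀ : E3 → E3 → E3 → E3 → ℝ) (f g : E3 → ℝ) (p : E3) :
    (pZ α β p)⁻¹ * Qplus α β S₀ f g p =
      α * β ^ 2 * ∫ q, ∫ ω, gainKer α β S₀ f g ((p, q), ω) ∂sphMeas := by
  simp only [Qplus, gainKer, integral_const_mul]
  ring

/-- Linearity of the iterated integral over `q` and `ω`, for almost every `p`, with the resulting
`L¹` bound. The a.e. restriction is needed because the slices of an integrable function are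
integrable only almost everywhere. -/
lemma iterated_sub {H₁ H₂ : (E3 × E3) × Metric.sphere (0 : E3) 1 → ℝ}
    (h₁ : Integrable H₁ ((volume : Measure (E3 × E3)).prod sphMeas))
    (h₂ : Integrable H₂ ((volume : Measure (E3 × E3)).prod sphMeas)) :
    ∃ R : E3 → ℝ, Integrable R ∧
      (∀ᵐ p, (∫ q, ∫ ω, H₁ ((p, q), ω) ∂sphMeas) - (∫ q, ∫ ω, H₂ ((p, q), ω) ∂sphMeas) = R p) ∧
      ∫ p, ‖R p‖ ≤ ∫ x, ‖H₁ x - H₂ x‖ ∂((volume : Measure (E3 × E3)).prod sphMeas) := by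
  have hD := h₁.sub h₂
  have k₁ := h₁.integral_prod_left
  have k₂ := h₂.integral_prod_left
  have kD := hD.integral_prod_left
  have kN := hD.norm.integral_prod_left
  have heq : ∀ᵐ z : E3 × E3, (∫ ω, (H₁ - H₂) (z, ω) ∂sphMeas) =
      (∫ ω, H₁ (z, ω) ∂sphMeas) - ∫ ω, H₂ (z, ω) ∂sphMeas := by
    filter_upwards [h₁.prod_right_ae, h₂.prod_right_ae] with z e₁ e₂
    exact integral_sub e₁ e₂
  rw [Measure.volume_eq_prod] at heq k₁ k₂ kD
  refine ⟨fun p => ∫ q, ∫ ω, (H₁ - H₂) ((p, q), ω) ∂sphMeas, kD.integral_prod_left, ?_, ?_⟩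
  · filter_upwards [Measure.ae_ae_of_ae_prod heq, k₁.prod_right_ae, k₂.prod_right_ae]
      with p e e₁ e₂
    rw [integral_congr_ae e, integral_sub e₁ e₂]
  · calc ∫ p, ‖∫ q, ∫ ω, (H₁ - H₂) ((p, q), ω) ∂sphMeas‖
        ≤ ∫ p : E3, ∫ q : E3, ‖∫ ω, (H₁ - H₂) ((p, q), ω) ∂sphMeas‖ :=
          integral_mono kD.integral_prod_left.norm kD.norm.integral_prod_left
            fun p => norm_integral_le_integral_norm _
      _ = ∫ z : E3 × E3, ‖∫ ω, (H₁ - H₂) (z, ω) ∂sphMeas‖ := by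
          rw [Measure.volume_eq_prod, integral_prod _ kD.norm]
      _ ≤ ∫ z : E3 × E3, ∫ ω, ‖(H₁ - H₂) (z, ω)‖ ∂sphMeas := by
          refine integral_mono ?_ kN fun z => norm_integral_le_integral_norm _
          rw [Measure.volume_eq_prod]; exact kD.norm
      _ = _ := by rw [← integral_prod _ hD.norm]; rfl

/-- The gain term is locally Lipschitz in `L¹`: the bilinear splitting
`Q⁺(f,f) - Q⁺(g,g) = Q⁺(f-g,f) + Q⁺(g,f-g)` costs `‖f‖ + ‖g‖`. -/
lemma gain_difference {α β C₁ : ℝ} (hα : 0 < α) (hβ : 0 < β) (hC₁ : 0 < C₁)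
    {S₀ : E3 → E3 → E3 → E3 → ℝ}
    (hS : Measurable fun x : (E3 × E3) × E3 × E3 => S₀ x.1.1 x.1.2 x.2.1 x.2.2)
    (hS0 : ∀ p q p' q', 0 ≤ S₀ p q p' q') (hS1 : ∀ p q p' q', S₀ p q p' q' ≤ C₁)
    {f g : E3 → ℝ} (hf : Measurable f) (hg : Measurable g)
    (hfi : Integrable f) (hgi : Integrable g) :
    ∃ R : E3 → ℝ, Integrable R ∧
      (∀ᵐ p, (pZ α β p)⁻¹ * Qplus α β S₀ f f p - (pZ α β p)⁻¹ * Qplus α β S₀ g g p = R p) ∧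
      ∫ p, ‖R p‖ ≤ 4 * π * C₁ * α * β ^ 2 * ((∫ p, ‖f p‖) + ∫ p, ‖g p‖) * ∫ p, ‖f p - g p‖ := by
  obtain ⟨i₁, -⟩ := gainKer_integral hα hβ hC₁ hS hS0 hS1 hf hf hfi hfi
  obtain ⟨i₂, -⟩ := gainKer_integral hα hβ hC₁ hS hS0 hS1 hg hg hgi hgi
  obtain ⟨i₃, b₃⟩ := gainKer_integral hα hβ hC₁ hS hS0 hS1 (hf.sub hg) hf (hfi.sub hgi) hfi
  obtain ⟨i₄, b₄⟩ := gainKer_integral hα hβ hC₁ hS hS0 hS1 hg (hf.sub hg) hgi (hfi.sub hgi)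
  obtain ⟨R, hRi, hR, hRb⟩ := iterated_sub i₁ i₂
  refine ⟨fun p => α * β ^ 2 * R p, hRi.const_mul _, ?_, ?_⟩
  · filter_upwards [hR] with p hp
    rw [Qplus_eq, Qplus_eq, ← hp]
    ring
  · have hc : 0 < α * β ^ 2 := by positivity
    have hD : ∫ x, ‖gainKer α β S₀ f f x - gainKer α β S₀ g g x‖
          ∂((volume : Measure (E3 × E3)).prod sphMeas) ≤
        4 * π * C₁ * ((∫ p, ‖f p - g p‖) * ∫ q, ‖f q‖) +
          4 * π * C₁ * ((∫ p, ‖g p‖) * ∫ q, ‖f q - g q‖) := by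
      refine le_trans ?_ (add_le_add b₃ b₄)
      rw [← integral_add i₃.norm i₄.norm]
      refine integral_mono (i₁.sub i₂).norm (i₃.norm.add i₄.norm) fun x => ?_
      have : gainKer α β S₀ f f x - gainKer α β S₀ g g x =
          gainKer α β S₀ (f - g) f x + gainKer α β S₀ g (f - g) x := by
        simp only [gainKer, Pi.sub_apply]
        ring
      simp only [this]
      exact norm_add_le _ _
    simp only [norm_mul, Real.norm_of_nonneg hc.le, integral_const_mul] at *
    calc α * β ^ 2 * ∫ p, ‖R p‖ ≤ α * β ^ 2 * _ :=
          mul_le_mul_of_nonneg_left (hRb.trans hD) hc.le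
      _ = _ := by ring

/-! ### The loss term -/

/-- The collision frequency: the factor of `f(p̄)` in `Q⁻(f, g)(p̄)`. -/
noncomputable def lossFreq (α β : ℝ) (S₀ : E3 → E3 → E3 → E3 → ℝ) (g : E3 → ℝ) (p : E3) : ℝ :=
  α * β ^ 2 * ∫ q, g q * ((pZ α β q)⁻¹ * ∫ ω : Metric.sphere (0 : E3) 1,
    S₀ p q (pPr α β p q ω) (qPr α β p q ω) ∂sphMeas)

lemma Qminus_eq (α β : ℝ) (S₀ : E3 → E3 → E3 → E3 → ℝ) (f g : E3 → ℝ) (p : E3) :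
    Qminus α β S₀ f g p = f p * lossFreq α β S₀ g p := by
  have : ∀ q, (pZ α β q)⁻¹ * ∫ ω : Metric.sphere (0 : E3) 1,
      f p * g q * S₀ p q (pPr α β p q ω) (qPr α β p q ω) ∂sphMeas =
      f p * (g q * ((pZ α β q)⁻¹ * ∫ ω : Metric.sphere (0 : E3) 1,
        S₀ p q (pPr α β p q ω) (qPr α β p q ω) ∂sphMeas)) := fun q => by
    rw [integral_const_mul]; ring
  simp only [Qminus, lossFreq, this]
  rw [integral_const_mul]
  ring

section Loss

variable {α β C₁ : ℝ} {S₀ : E3 → E3 → E3 → E3 → ℝ}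

lemma lossKer_nonneg (hS0 : ∀ p q p' q', 0 ≤ S₀ p q p' q') (p q : E3) :
    0 ≤ (pZ α β q)⁻¹ * ∫ ω : Metric.sphere (0 : E3) 1,
      S₀ p q (pPr α β p q ω) (qPr α β p q ω) ∂sphMeas :=
  mul_nonneg (inv_nonneg.2 (Real.sqrt_nonneg _)) (integral_nonneg fun _ => hS0 _ _ _ _)

lemma lossKer_le (hS0 : ∀ p q p' q', 0 ≤ S₀ p q p' q')
    (hS1 : ∀ p q p' q', S₀ p q p' q' ≤ C₁) (p q : E3) :
    (pZ α β q)⁻¹ * ∫ ω : Metric.sphere (0 : E3) 1,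
      S₀ p q (pPr α β p q ω) (qPr α β p q ω) ∂sphMeas ≤ 4 * π * C₁ := by
  have h1 : ∫ ω : Metric.sphere (0 : E3) 1,
      S₀ p q (pPr α β p q ω) (qPr α β p q ω) ∂sphMeas ≤ 4 * π * C₁ := by
    have := norm_integral_le_of_norm_le_const (μ := sphMeas) (C := C₁)
      (f := fun ω : Metric.sphere (0 : E3) 1 => S₀ p q (pPr α β p q ω) (qPr α β p q ω))
      (Filter.Eventually.of_forall fun ω => by
        rw [Real.norm_of_nonneg (hS0 _ _ _ _)]; exact hS1 _ _ _ _)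
    rw [measureReal_def, sphMeas_univ, ENNReal.toReal_ofReal (by positivity)] at this
    linarith [le_trans (le_abs_self _) this]
  calc _ ≤ 1 * (4 * π * C₁) :=
        mul_le_mul (inv_le_one_of_one_le₀ (one_le_pZ α β q)) h1
          (integral_nonneg fun _ => hS0 _ _ _ _) zero_le_one
    _ = _ := one_mul _

lemma loss_integrable
    (hS : Measurable fun x : (E3 × E3) × E3 × E3 => S₀ x.1.1 x.1.2 x.2.1 x.2.2)
    (hS0 : ∀ p q p' q', 0 ≤ S₀ p q p' q') (hS1 : ∀ p q p' q', S₀ p q p' q' ≤ C₁)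
    {g : E3 → ℝ} (hgi : Integrable g) (p : E3) :
    Integrable fun q => g q * ((pZ α β q)⁻¹ * ∫ ω : Metric.sphere (0 : E3) 1,
      S₀ p q (pPr α β p q ω) (qPr α β p q ω) ∂sphMeas) := by
  have hk : StronglyMeasurable fun z : E3 × E3 => ∫ ω : Metric.sphere (0 : E3) 1,
      S₀ z.1 z.2 (pPr α β z.1 z.2 ω) (qPr α β z.1 z.2 ω) ∂sphMeas :=
    (measurable_kernel α β hS).stronglyMeasurable.integral_prod_right'
  have hk' := (measurable_pZ α β).inv.mul
    (hk.measurable.comp (measurable_const (a := p) |>.prodMk measurable_id))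
  refine hgi.mul_bdd (c := 4 * π * C₁) hk'.aestronglyMeasurable
    (Filter.Eventually.of_forall fun q => ?_)
  exact (Real.norm_of_nonneg (lossKer_nonneg hS0 p q)).trans_le (lossKer_le hS0 hS1 p q)

lemma lossFreq_nonneg (hα : 0 < α) (hS0 : ∀ p q p' q', 0 ≤ S₀ p q p' q')
    {g : E3 → ℝ} (hg : 0 ≤ᵐ[volume] g) (p : E3) : 0 ≤ lossFreq α β S₀ g p := by
  refine mul_nonneg (by positivity) (integral_nonneg_of_ae ?_)
  filter_upwards [hg] with q hq
  exact mul_nonneg hq (lossKer_nonneg hS0 p q)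

lemma lossFreq_sub
    (hS : Measurable fun x : (E3 × E3) × E3 × E3 => S₀ x.1.1 x.1.2 x.2.1 x.2.2)
    (hS0 : ∀ p q p' q', 0 ≤ S₀ p q p' q') (hS1 : ∀ p q p' q', S₀ p q p' q' ≤ C₁)
    {f g : E3 → ℝ} (hfi : Integrable f) (hgi : Integrable g) (p : E3) :
    lossFreq α β S₀ f p - lossFreq α β S₀ g p = lossFreq α β S₀ (fun q => f q - g q) p := by
  simp only [lossFreq, sub_mul]
  rw [integral_sub (loss_integrable hS hS0 hS1 hfi p)
    (loss_integrable hS hS0 hS1 hgi p)]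
  ring

lemma lossFreq_le (hα : 0 < α)
    (hS0 : ∀ p q p' q', 0 ≤ S₀ p q p' q') (hS1 : ∀ p q p' q', S₀ p q p' q' ≤ C₁)
    {g : E3 → ℝ} (hgi : Integrable g) (p : E3) :
    |lossFreq α β S₀ g p| ≤ 4 * π * C₁ * α * β ^ 2 * ∫ q, ‖g q‖ := by
  have hb : ‖∫ q, g q * ((pZ α β q)⁻¹ * ∫ ω : Metric.sphere (0 : E3) 1,
      S₀ p q (pPr α β p q ω) (qPr α β p q ω) ∂sphMeas)‖ ≤ ∫ q, ‖g q‖ * (4 * π * C₁) := by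
    refine norm_integral_le_of_norm_le (hgi.norm.mul_const _)
      (Filter.Eventually.of_forall fun q => ?_)
    rw [norm_mul, Real.norm_of_nonneg (lossKer_nonneg hS0 p q)]
    exact mul_le_mul_of_nonneg_left (lossKer_le hS0 hS1 p q) (norm_nonneg _)
  rw [integral_mul_const] at hb
  have hc : 0 ≤ α * β ^ 2 := by positivity
  rw [lossFreq, abs_mul, abs_of_nonneg hc]
  calc _ ≤ α * β ^ 2 * ((∫ q, ‖g q‖) * (4 * π * C₁)) := mul_le_mul_of_nonneg_left hb hc
    _ = _ := by ring

end Loss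

theorem statement_9
    (C₀ C₁ α β : ℝ) (hC₀ : 0 < C₀) (hC₁ : 0 < C₁) (hα : C₀ ≤ α) (hβ : C₀ ≤ β)
    (S₀ : E3 → E3 → E3 → E3 → ℝ)
    (hS₀meas : Measurable fun x : (E3 × E3) × E3 × E3 => S₀ x.1.1 x.1.2 x.2.1 x.2.2)
    (hS₀nonneg : ∀ p q p' q', 0 ≤ S₀ p q p' q')
    (hS₀bdd : ∀ p q p' q', S₀ p q p' q' ≤ C₁)
    (hS₀symm : ∀ p q p' q', S₀ p q p' q' = S₀ p' q' p q)
    (r : ℝ) (hr : 0 < r) (n : ℕ)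
    (hn4 : 4 ≤ n) (hn1 : (1 + 4 * Real.pi * C₁ * α * β ^ 2 * r) / Real.sqrt n ≤ 1)
    (hn2 : 3 * (4 * Real.pi * C₁ * α * β ^ 2) * r * (1 + 4 * Real.pi * C₁ * α * β ^ 2 * r) / Real.sqrt n ≤ 1 / 2)
    (u v wu wv : L1) (hu : memX r u) (hv : memX r v) (hwu : memX r wu) (hwv : memX r wv)
    (hequ : (fun p : E3 => Real.sqrt n * wu p - (pZ α β p)⁻¹ * Qcoll α β S₀ (⇑wu) (⇑wu) p)
      =ᵐ[volume] ⇑u)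
    (heqv : (fun p : E3 => Real.sqrt n * wv p - (pZ α β p)⁻¹ * Qcoll α β S₀ (⇑wv) (⇑wv) p)
      =ᵐ[volume] ⇑v) :
    ‖wu - wv‖ ≤ 2 / Real.sqrt n * ‖u - v‖ := by
  have hα0 : 0 < α := hC₀.trans_le hα
  have hβ0 : 0 < β := hC₀.trans_le hβ
  have mu := (Lp.stronglyMeasurable wu).measurable
  have mv := (Lp.stronglyMeasurable wv).measurable
  have iu : Integrable wu := L1.integrable_coeFn wu
  have iv : Integrable wv := L1.integrable_coeFn wv
  have iuv : Integrable (fun p => u p - v p) :=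
    (L1.integrable_coeFn u).sub (L1.integrable_coeFn v)
  have nw : ‖wu - wv‖ = ∫ p, ‖wu p - wv p‖ := by
    rw [L1.norm_eq_integral_norm]
    refine integral_congr_ae ?_
    filter_upwards [Lp.coeFn_sub wu wv] with p hp
    rw [hp, Pi.sub_apply]
  have nuv : ‖u - v‖ = ∫ p, ‖u p - v p‖ := by
    rw [L1.norm_eq_integral_norm]
    refine integral_congr_ae ?_
    filter_upwards [Lp.coeFn_sub u v] with p hp
    rw [hp, Pi.sub_apply]
  have nu : ∫ p, ‖wu p‖ ≤ r := by rw [← L1.norm_eq_integral_norm]; exact hwu.2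
  have nv : ∫ p, ‖wv p‖ ≤ r := by rw [← L1.norm_eq_integral_norm]; exact hwv.2
  obtain ⟨R, hRi, hR, hRb⟩ :=
    gain_difference hα0 hβ0 hC₁ hS₀meas hS₀nonneg hS₀bdd mu mv iu iv
  rw [nw, nuv]
  have hΔ0 : 0 ≤ ∫ p, ‖wu p - wv p‖ := integral_nonneg fun _ => norm_nonneg _
  set Δ := ∫ p, ‖wu p - wv p‖ with hΔ
  set K := 4 * π * C₁ * α * β ^ 2 with hK
  have hK0 : 0 < K := by positivity
  have hn0 : 0 < √(n : ℝ) := Real.sqrt_pos.2 (by exact_mod_cast (by omega : 0 < n))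
  -- The part `Q⁻(wu, wu) - Q⁻(wv, wu) = (wu - wv) L(wu)` of the loss difference has a sign and only
  -- enlarges the coefficient of `wu - wv`, so it does not contribute to the error.
  have pointwise : ∀ᵐ p, √(n : ℝ) * ‖wu p - wv p‖ ≤
      ‖u p - v p‖ + K * Δ * ‖wv p‖ + ‖R p‖ := by
    filter_upwards [hequ, heqv, hR] with p eu ev eR
    simp only [Qcoll, Qminus_eq] at eu ev
    have hL0 : 0 ≤ lossFreq α β S₀ wu p := lossFreq_nonneg hα0 hS₀nonneg hwu.1 p
    have hLs := lossFreq_sub (α := α) (β := β) hS₀meas hS₀nonneg hS₀bdd iu iv p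
    have hLb := lossFreq_le (β := β) hα0 hS₀nonneg hS₀bdd (iu.sub iv) p
    have hz : 0 ≤ (pZ α β p)⁻¹ := inv_nonneg.2 (Real.sqrt_nonneg _)
    have hz1 : (pZ α β p)⁻¹ ≤ 1 := inv_le_one_of_one_le₀ (one_le_pZ α β p)
    have hid : (√(n : ℝ) + (pZ α β p)⁻¹ * lossFreq α β S₀ wu p) * (wu p - wv p) =
        (u p - v p) - (pZ α β p)⁻¹ * (wv p * lossFreq α β S₀ (fun q => wu q - wv q) p) + R p := by
      rw [← eR, ← hLs, ← eu, ← ev]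
      ring
    have hloss : ‖(pZ α β p)⁻¹ * (wv p * lossFreq α β S₀ (fun q => wu q - wv q) p)‖ ≤
        K * Δ * ‖wv p‖ := by
      rw [norm_mul, norm_mul, Real.norm_of_nonneg hz]
      calc _ ≤ 1 * (‖wv p‖ * (K * Δ)) :=
            mul_le_mul hz1 (mul_le_mul_of_nonneg_left hLb (norm_nonneg _)) (by positivity)
              zero_le_one
        _ = _ := by ring
    calc √(n : ℝ) * ‖wu p - wv p‖
        ≤ ‖(√(n : ℝ) + (pZ α β p)⁻¹ * lossFreq α β S₀ wu p) * (wu p - wv p)‖ := by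
          rw [norm_mul, Real.norm_of_nonneg (add_nonneg hn0.le (mul_nonneg hz hL0))]
          exact mul_le_mul_of_nonneg_right (le_add_of_nonneg_right (mul_nonneg hz hL0))
            (norm_nonneg _)
      _ ≤ _ := by
          rw [hid]
          exact (norm_add_le _ _).trans (add_le_add_left ((norm_sub_le _ _).trans
            (add_le_add_right hloss _)) _)
  have hint : √(n : ℝ) * Δ ≤ (∫ p, ‖u p - v p‖) + K * Δ * (∫ p, ‖wv p‖) + ∫ p, ‖R p‖ := by
    have h := integral_mono_ae ((iu.sub iv).norm.const_mul √(n : ℝ))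
      ((iuv.norm.add (iv.norm.const_mul (K * Δ))).add hRi.norm) pointwise
    simp only [Pi.add_apply, Pi.sub_apply] at h
    rw [integral_const_mul] at h
    refine h.trans_eq ?_
    rw [← integral_const_mul (K * Δ), ← integral_add iuv.norm (iv.norm.const_mul (K * Δ))]
    exact integral_add (iuv.norm.add (iv.norm.const_mul (K * Δ))) hRi.norm
  have h1 : K * Δ * (∫ p, ‖wv p‖) ≤ K * Δ * r :=
    mul_le_mul_of_nonneg_left nv (by positivity)
  have h2 : ∫ p, ‖R p‖ ≤ K * (r + r) * Δ :=
    hRb.trans (mul_le_mul_of_nonneg_right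
      (mul_le_mul_of_nonneg_left (add_le_add nu nv) hK0.le) hΔ0)
  have h3 : 6 * K * r ≤ √(n : ℝ) := by
    rw [div_le_iff₀ hn0] at hn2
    nlinarith [mul_pos hK0 hr, sq_nonneg (K * r)]
  rw [div_mul_eq_mul_div, le_div_iff₀ hn0]
  nlinarith [mul_le_mul_of_nonneg_right h3 hΔ0]
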